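/- arXiv:math/0005147 — 2 statements merged into one kernel-verified Lean document; each statement's English description precedes it below -/
import Mathlib

section
/- Let f be Hölder continuous with exponent β and g Hölder continuous with exponent γ on the real line, with β + γ > 1. Then for all t > 0 the Stieltjes integral ∫₀ᵗ f dg exists, i.e. the Riemann–Stieltjes sums over partitions converge as the mesh tends to 0. -/
open Set Finset

/-- Left-endpoint Riemann–Stieltjes sum of `f` against `g` for the tagged
partition given by the points `t 0 ≤ t 1 ≤ ⋯ ≤ t n`. -/
noncomputable def RSsum (f g : ℝ → ℝ) (n : ℕ) (t : Fin (n + 1) → ℝ) : ℝ :=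
  ∑ i : Fin n, f (t i.castSucc) * (g (t i.succ) - g (t i.castSucc))

/-- `I` is the Riemann–Stieltjes integral `∫_a^b f dg`: the Riemann–Stieltjes
sums over partitions of `[a,b]` converge to `I` as the mesh tends to `0`. -/
def IsRSIntegral (f g : ℝ → ℝ) (a b I : ℝ) : Prop :=
  ∀ ε > 0, ∃ δ > 0, ∀ (n : ℕ) (t : Fin (n + 1) → ℝ),
    Monotone t → t 0 = a → t (Fin.last n) = b →
    (∀ i : Fin n, t i.succ - t i.castSucc < δ) →
    |RSsum f g n t - I| < ε

/-!
The increments `A x y = f x * (g y - g x)` are almost additive: cutting `[x, z]` at `y` changes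
`A x z` by `(f y - f x) * (g z - g y)`, which is `O(|z - x| ^ θ)` with `θ = β + γ > 1`. Such
increments can be sewn together. Halving an interval repeatedly, the errors form a convergent
geometric series because `2 * 2 ^ (-θ) < 1`, so the sum over any subdivision of `[u, v]` stays
within `K |v - u| ^ θ` of `A u v`, whatever the number of points. Hence refining a subdivision
of `[a, b]` of mesh `δ` changes its sum by at most `K δ ^ (θ - 1) (b - a)`. Two subdivisions of
small mesh are both close to their common refinement, and the sums are Cauchy as the mesh tends
to `0`.
-/

open Filter Topology
open scoped NNReal

section Sewing

variable {E : Type*} [NormedAddCommGroup E] {A : ℝ → ℝ → E} {C : ℝ≥0} {θ δ a b u v : ℝ}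
  {s s' : Set ℝ} {t q : ℕ → ℝ} {m n : ℕ}

/-- The hypothesis of the sewing lemma: the increments `A x y` of a two-parameter function fail to
be additive by at most `C |z - x| ^ θ` when an interval `[x, z]` with endpoints in `s` is cut at a
point of `s`. -/
def AlmostAdditiveOn (A : ℝ → ℝ → E) (C : ℝ≥0) (θ : ℝ) (s : Set ℝ) : Prop :=
  ∀ ⦃x⦄, x ∈ s → ∀ ⦃y⦄, y ∈ s → ∀ ⦃z⦄, z ∈ s → x ≤ y → y ≤ z →
    ‖A x y + A y z - A x z‖ ≤ C * (z - x) ^ θ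

/-- The sewing constant `2 C / (1 - 2 ^ (1 - θ))`, the solution of `K = 2 * 2 ^ (-θ) * K + 2 * C`:
when an interval is cut into two pieces of at most half its length and a middle piece, it is the
constant for which the bound on the two pieces reproduces itself on the whole interval. -/
noncomputable def sewingConst (C : ℝ≥0) (θ : ℝ) : ℝ :=
  2 * C / (1 - 2 ^ (1 - θ))

/-- A subdivision `a = t 0 ≤ ⋯ ≤ t n = b`. It is encoded as a monotone sequence indexed by all
of `ℕ`; the terms after the `n`-th are irrelevant and may exceed `b`. -/
structure IsSubdivision (t : ℕ → ℝ) (n : ℕ) (a b : ℝ) : Prop where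
  monotone : Monotone t
  zero_eq : t 0 = a
  last_eq : t n = b

/-- The sum of the increments `A (t k) (t (k + 1))` over the `n` intervals of a subdivision. -/
def incrementSum (A : ℝ → ℝ → E) (t : ℕ → ℝ) (n : ℕ) : E :=
  ∑ k ∈ Finset.range n, A (t k) (t (k + 1))

/-- The sum of the increments of `A` over the common refinement of the subdivisions `t` and `q`.
Instead of merging the two sequences, each interval of `t` is subdivided by the projections of all
the points of `q` onto it, which only adds intervals of length zero. -/
def refinedSum (A : ℝ → ℝ → E) (t : ℕ → ℝ) (n : ℕ) (q : ℕ → ℝ) (m : ℕ) : E :=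
  ∑ i ∈ Finset.range n, incrementSum A (fun j => max (t i) (min (t (i + 1)) (q j))) m

lemma one_sub_two_rpow_one_sub_pos (hθ : 1 < θ) : 0 < 1 - (2 : ℝ) ^ (1 - θ) :=
  sub_pos.2 (Real.rpow_lt_one_of_one_lt_of_neg one_lt_two (by linarith))

lemma sewingConst_nonneg (hθ : 1 < θ) : 0 ≤ sewingConst C θ :=
  div_nonneg (by positivity) (one_sub_two_rpow_one_sub_pos hθ).le

lemma sewingConst_mul_rpow_half {x : ℝ} (hθ : 1 < θ) (hx : 0 ≤ x) :
    2 * (sewingConst C θ * (x / 2) ^ θ) + 2 * (C * x ^ θ) = sewingConst C θ * x ^ θ := by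
  have hfix : sewingConst C θ * (1 - 2 ^ (1 - θ)) = 2 * C :=
    div_mul_cancel₀ _ (one_sub_two_rpow_one_sub_pos hθ).ne'
  have hhalf : 2 * (x / 2) ^ θ = 2 ^ (1 - θ) * x ^ θ := by
    rw [Real.div_rpow hx zero_le_two, Real.rpow_sub two_pos, Real.rpow_one]
    ring
  linear_combination sewingConst C θ * hhalf - x ^ θ * hfix

lemma tendsto_sewingConst_mul_rpow (C : ℝ≥0) (hθ : 1 < θ) (L : ℝ) :
    Tendsto (fun δ => 2 * (sewingConst C θ * δ ^ (θ - 1) * L)) (𝓝 0) (𝓝 0) := by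
  have hrpow : Tendsto (fun δ : ℝ => δ ^ (θ - 1)) (𝓝 0) (𝓝 0) :=
    (Real.continuous_rpow_const (by linarith)).tendsto' 0 0 (Real.zero_rpow (by linarith))
  simpa using ((hrpow.const_mul (sewingConst C θ)).mul_const L).const_mul 2

lemma exists_le_and_le_succ {α : Type*} [LinearOrder α] {t : ℕ → α} {y : α} (hmn : m < n)
    (hm : t m ≤ y) (hn : y ≤ t n) : ∃ i, m ≤ i ∧ i < n ∧ t i ≤ y ∧ y ≤ t (i + 1) := by
  induction n, hmn using Nat.le_induction with
  | base => exact ⟨m, le_rfl, m.lt_succ_self, hm, hn⟩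
  | succ n hmn ih =>
    rcases le_total y (t n) with hy | hy
    · obtain ⟨i, hmi, hin, hi⟩ := ih hy
      exact ⟨i, hmi, hin.trans n.lt_succ_self, hi⟩
    · exact ⟨n, (Nat.le_succ m).trans hmn, n.lt_succ_self, hy, hn⟩

namespace IsSubdivision

lemma mem_Icc (ht : IsSubdivision t n a b) {k : ℕ} (hk : k ≤ n) : t k ∈ Set.Icc a b :=
  ⟨ht.zero_eq ▸ ht.monotone k.zero_le, ht.last_eq ▸ ht.monotone hk⟩

lemma clamp (ht : IsSubdivision t n a b) (hau : a ≤ u) (huv : u ≤ v) (hvb : v ≤ b) :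
    IsSubdivision (fun k => max u (min v (t k))) n u v where
  monotone _ _ hij := max_le_max le_rfl (min_le_min le_rfl (ht.monotone hij))
  zero_eq := max_eq_left (min_le_of_right_le (ht.zero_eq.trans_le hau))
  last_eq := by rw [ht.last_eq, min_eq_left hvb, max_eq_right huv]

lemma uniform (hab : a ≤ b) (n : ℕ) :
    IsSubdivision (fun k => a + k * ((b - a) / (n + 1))) (n + 1) a b where
  monotone i j hij := by
    have : 0 ≤ b - a := sub_nonneg.2 hab
    dsimp only
    gcongr
  zero_eq := by simp
  last_eq := by
    push_cast
    field_simp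
    ring

end IsSubdivision

namespace AlmostAdditiveOn

lemma mono (hA : AlmostAdditiveOn A C θ s) (hs : s' ⊆ s) : AlmostAdditiveOn A C θ s' :=
  fun _ hx _ hy _ hz => hA (hs hx) (hs hy) (hs hz)

lemma apply_self (hA : AlmostAdditiveOn A C θ s) (hθ : θ ≠ 0) {x : ℝ} (hx : x ∈ s) :
    A x x = 0 := by
  simpa [Real.zero_rpow hθ] using hA hx hx hx le_rfl le_rfl

lemma norm_add_add_sub_le (hA : AlmostAdditiveOn A C θ s) (hθ : 0 ≤ θ) {x y z w : ℝ}
    (hx : x ∈ s) (hy : y ∈ s) (hz : z ∈ s) (hw : w ∈ s) (hxy : x ≤ y) (hyz : y ≤ z) (hzw : z ≤ w) :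
    ‖A x y + A y z + A z w - A x w‖ ≤ 2 * (C * (w - x) ^ θ) := by
  have hsplit : A x y + A y z + A z w - A x w =
      (A x y + A y w - A x w) + (A y z + A z w - A y w) := by abel
  have houter := hA hx hy hw hxy (hyz.trans hzw)
  have hinner : ‖A y z + A z w - A y w‖ ≤ C * (w - x) ^ θ :=
    (hA hy hz hw hyz hzw).trans (by gcongr; linarith)
  rw [hsplit, two_mul]
  exact norm_add_le_of_le houter hinner

/-- Induction on the number of intervals: cutting out the interval that contains the midpoint leaves
two parts of at most half the length. -/
lemma norm_sum_Ico_sub_le (hA : AlmostAdditiveOn A C θ s) (hθ : 1 < θ) (ht : Monotone t)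
    (hmn : m ≤ n) (hts : ∀ k, m ≤ k → k ≤ n → t k ∈ s) :
    ‖∑ k ∈ Finset.Ico m n, A (t k) (t (k + 1)) - A (t m) (t n)‖ ≤
      sewingConst C θ * (t n - t m) ^ θ := by
  have hθ0 : 0 < θ := one_pos.trans hθ
  have hK : 0 ≤ sewingConst C θ := sewingConst_nonneg hθ
  induction hd : n - m using Nat.strong_induction_on generalizing m n with
  | _ d ih =>
    rcases hmn.eq_or_lt with rfl | hlt
    · simp [hA.apply_self hθ0.ne' (hts m le_rfl le_rfl), Real.zero_rpow hθ0.ne']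
    have htmn : t m ≤ t n := ht hmn
    obtain ⟨i, hmi, hin, hi, hi'⟩ := exists_le_and_le_succ (t := t) (y := (t m + t n) / 2) hlt
      (by linarith) (by linarith)
    have hleft : ‖∑ k ∈ Finset.Ico m i, A (t k) (t (k + 1)) - A (t m) (t i)‖ ≤
        sewingConst C θ * ((t n - t m) / 2) ^ θ := by
      refine (ih (i - m) (by omega) hmi (fun k hk hk' => hts k hk (by omega)) rfl).trans ?_
      have : 0 ≤ t i - t m := sub_nonneg.2 (ht hmi)
      gcongr
      linarith
    have hright : ‖∑ k ∈ Finset.Ico (i + 1) n, A (t k) (t (k + 1)) - A (t (i + 1)) (t n)‖ ≤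
        sewingConst C θ * ((t n - t m) / 2) ^ θ := by
      refine (ih (n - (i + 1)) (by omega) hin (fun k hk hk' => hts k (by omega) hk') rfl).trans ?_
      have : 0 ≤ t n - t (i + 1) := sub_nonneg.2 (ht hin)
      gcongr
      linarith
    have hmid := hA.norm_add_add_sub_le hθ0.le (hts m le_rfl hmn) (hts i hmi hin.le)
      (hts (i + 1) (by omega) hin) (hts n hmn le_rfl) (ht hmi) (ht i.le_succ) (ht hin)
    rw [← Finset.sum_Ico_consecutive _ hmi hin.le, Finset.sum_eq_sum_Ico_succ_bot hin,
      ← sewingConst_mul_rpow_half hθ (sub_nonneg.2 htmn), two_mul (sewingConst C θ * _)]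
    refine le_of_eq_of_le (congrArg norm ?_)
      (norm_add_le_of_le (norm_add_le_of_le hleft hright) hmid)
    abel

lemma norm_incrementSum_sub_le (hA : AlmostAdditiveOn A C θ (Set.Icc a b)) (hθ : 1 < θ)
    (ht : IsSubdivision t n a b) :
    ‖incrementSum A t n - A a b‖ ≤ sewingConst C θ * (b - a) ^ θ := by
  have h := hA.norm_sum_Ico_sub_le hθ ht.monotone n.zero_le fun k _ hk => ht.mem_Icc hk
  rwa [← Finset.range_eq_Ico, ht.zero_eq, ht.last_eq] at h

lemma norm_incrementSum_sub_refinedSum_le (hA : AlmostAdditiveOn A C θ (Set.Icc a b))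
    (hθ : 1 < θ) (ht : IsSubdivision t n a b) (hq : IsSubdivision q m a b)
    (hδ : ∀ k < n, t (k + 1) - t k ≤ δ) :
    ‖incrementSum A t n - refinedSum A t n q m‖ ≤
      sewingConst C θ * δ ^ (θ - 1) * (b - a) := by
  have hK : 0 ≤ sewingConst C θ := sewingConst_nonneg hθ
  have hterm : ∀ k ∈ Finset.range n,
      ‖A (t k) (t (k + 1)) - incrementSum A (fun j => max (t k) (min (t (k + 1)) (q j))) m‖ ≤
        sewingConst C θ * δ ^ (θ - 1) * (t (k + 1) - t k) := by
    intro k hk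
    have hkn : k < n := Finset.mem_range.1 hk
    have hle : t k ≤ t (k + 1) := ht.monotone k.le_succ
    have hd : 0 ≤ t (k + 1) - t k := sub_nonneg.2 hle
    obtain ⟨hak, -⟩ := ht.mem_Icc hkn.le
    obtain ⟨-, hkb⟩ := ht.mem_Icc hkn
    rw [norm_sub_rev]
    calc
      _ ≤ sewingConst C θ * (t (k + 1) - t k) ^ θ :=
        (hA.mono (Set.Icc_subset_Icc hak hkb)).norm_incrementSum_sub_le hθ (hq.clamp hak hle hkb)
      _ = sewingConst C θ * (t (k + 1) - t k) ^ (θ - 1) * (t (k + 1) - t k) := by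
        rw [mul_assoc, ← Real.rpow_add_one' hd (by linarith), sub_add_cancel]
      _ ≤ sewingConst C θ * δ ^ (θ - 1) * (t (k + 1) - t k) := by
        have : 0 ≤ θ - 1 := sub_nonneg.2 hθ.le
        gcongr
        exact hδ k hkn
  calc
    _ ≤ ∑ k ∈ Finset.range n, sewingConst C θ * δ ^ (θ - 1) * (t (k + 1) - t k) := by
      rw [incrementSum, refinedSum, ← Finset.sum_sub_distrib]
      exact norm_sum_le_of_le _ hterm
    _ = sewingConst C θ * δ ^ (θ - 1) * (b - a) := by
      rw [← Finset.mul_sum, Finset.sum_range_sub, ht.zero_eq, ht.last_eq]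

end AlmostAdditiveOn

/-- Projecting `[x, y]` onto `[u, v]`, or `[u, v]` onto `[x, y]`, gives the intersection of the two
intervals if they meet, and a single point otherwise. -/
lemma apply_clamp_comm {α M : Type*} [LinearOrder α] [Zero M] {A : α → α → M} {u v x y : α}
    (huv : u ≤ v) (hxy : x ≤ y) (hu : A u u = 0) (hv : A v v = 0) (hx : A x x = 0)
    (hy : A y y = 0) :
    A (max u (min v x)) (max u (min v y)) = A (max x (min y u)) (max x (min y v)) := by
  rcases lt_or_ge v x with hvx | hxv
  · have huy : u ≤ y := (huv.trans hvx.le).trans hxy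
    simp [hvx.le, hvx.le.trans hxy, huv, huv.trans hvx.le, huy, hv, hx]
  rcases lt_or_ge y u with hyu | huy
  · simp [hyu.le, hyu.le.trans huv, hxy, hxy.trans hyu.le, hu, hy]
  · simp [hxv, huy, huv, hxy, max_comm, min_comm]

lemma refinedSum_comm (ht : IsSubdivision t n a b) (hq : IsSubdivision q m a b)
    (hA : ∀ x ∈ Set.Icc a b, A x x = 0) : refinedSum A t n q m = refinedSum A q m t n := by
  unfold refinedSum incrementSum
  rw [Finset.sum_comm]
  refine Finset.sum_congr rfl fun j hj => Finset.sum_congr rfl fun i hi => ?_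
  have hi' : i < n := Finset.mem_range.1 hi
  have hj' : j < m := Finset.mem_range.1 hj
  exact apply_clamp_comm (ht.monotone i.le_succ) (hq.monotone j.le_succ)
    (hA _ (ht.mem_Icc hi'.le)) (hA _ (ht.mem_Icc hi')) (hA _ (hq.mem_Icc hj'.le))
    (hA _ (hq.mem_Icc hj'))

namespace AlmostAdditiveOn

lemma norm_incrementSum_sub_incrementSum_le (hA : AlmostAdditiveOn A C θ (Set.Icc a b))
    (hθ : 1 < θ) (ht : IsSubdivision t n a b) (hq : IsSubdivision q m a b)
    (htδ : ∀ k < n, t (k + 1) - t k ≤ δ) (hqδ : ∀ k < m, q (k + 1) - q k ≤ δ) :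
    ‖incrementSum A t n - incrementSum A q m‖ ≤
      2 * (sewingConst C θ * δ ^ (θ - 1) * (b - a)) := by
  have htq := hA.norm_incrementSum_sub_refinedSum_le hθ ht hq htδ
  have hqt := hA.norm_incrementSum_sub_refinedSum_le hθ hq ht hqδ
  rw [← refinedSum_comm ht hq fun x hx => hA.apply_self (by linarith) hx, norm_sub_rev] at hqt
  rw [two_mul]
  exact norm_sub_le_norm_sub_add_norm_sub .. |>.trans (add_le_add htq hqt)

theorem exists_norm_incrementSum_sub_le [CompleteSpace E]
    (hA : AlmostAdditiveOn A C θ (Set.Icc a b)) (hθ : 1 < θ) (hab : a ≤ b) :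
    ∃ I : E, ∀ δ > 0, ∀ (n : ℕ) (t : ℕ → ℝ), IsSubdivision t n a b →
      (∀ k < n, t (k + 1) - t k ≤ δ) →
      ‖incrementSum A t n - I‖ ≤ 2 * (sewingConst C θ * δ ^ (θ - 1) * (b - a)) := by
  let mesh (N : ℕ) : ℝ := (b - a) / (N + 1)
  let S (N : ℕ) : E := incrementSum A (fun k => a + k * mesh N) (N + 1)
  have hmesh : Tendsto mesh atTop (𝓝 0) := by
    simpa [mesh, div_eq_mul_inv] using
      (tendsto_one_div_add_atTop_nhds_zero_nat (𝕜 := ℝ)).const_mul (b - a)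
  have hstep {N M : ℕ} (hNM : N ≤ M) (k : ℕ) :
      a + (k + 1 : ℕ) * mesh M - (a + k * mesh M) ≤ mesh N := by
    have : 0 ≤ b - a := sub_nonneg.2 hab
    calc
      _ = mesh M := by push_cast; ring
      _ ≤ mesh N := by dsimp only [mesh]; gcongr
  have hcauchy : CauchySeq S := by
    refine cauchySeq_of_le_tendsto_0 _ (fun M M' N hM hM' => ?_)
      ((tendsto_sewingConst_mul_rpow C hθ (b - a)).comp hmesh)
    rw [dist_eq_norm]
    exact hA.norm_incrementSum_sub_incrementSum_le hθ (.uniform hab M) (.uniform hab M')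
      (fun k _ => hstep hM k) (fun k _ => hstep hM' k)
  obtain ⟨I, hI⟩ := cauchySeq_tendsto_of_complete hcauchy
  refine ⟨I, fun δ hδ n t ht htδ => le_of_tendsto (hI.const_sub _).norm ?_⟩
  filter_upwards [hmesh.eventually_le_const hδ] with N hN
  exact hA.norm_incrementSum_sub_incrementSum_le hθ ht (.uniform hab N) htδ
    fun k _ => (hstep le_rfl k).trans hN

end AlmostAdditiveOn

end Sewing

lemma almostAdditiveOn_smul_sub {R E : Type*} [SeminormedRing R] [NormedAddCommGroup E]
    [Module R E] [IsBoundedSMul R E] {f : ℝ → R} {g : ℝ → E} {Cf Cg β γ : ℝ≥0} {s : Set ℝ}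
    (hf : HolderOnWith Cf β f s) (hg : HolderOnWith Cg γ g s) :
    AlmostAdditiveOn (fun x y => f x • (g y - g x)) (Cf * Cg) (β + γ) s := by
  intro x hx y hy z hz hxy hyz
  have hfyx : ‖f y - f x‖ ≤ Cf * (z - x) ^ (β : ℝ) := by
    rw [← dist_eq_norm]
    exact hf.dist_le_of_le hy hx (by rw [Real.dist_eq, abs_of_nonneg] <;> linarith)
  have hgzy : ‖g z - g y‖ ≤ Cg * (z - x) ^ (γ : ℝ) := by
    rw [← dist_eq_norm]
    exact hg.dist_le_of_le hz hy (by rw [Real.dist_eq, abs_of_nonneg] <;> linarith)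
  have hxz : 0 ≤ z - x := by linarith
  calc
    _ = ‖(f y - f x) • (g z - g y)‖ := by
      simp only [smul_sub, sub_smul]
      abel_nf
    _ ≤ ‖f y - f x‖ * ‖g z - g y‖ := norm_smul_le _ _
    _ ≤ (Cf * (z - x) ^ (β : ℝ)) * (Cg * (z - x) ^ (γ : ℝ)) := by gcongr
    _ = (Cf * Cg : ℝ≥0) * (z - x) ^ (β + γ : ℝ) := by
      rw [Real.rpow_add_of_nonneg hxz β.coe_nonneg γ.coe_nonneg, NNReal.coe_mul]
      ring

lemma holderWith_toNNReal {X Y : Type*} [PseudoMetricSpace X] [PseudoMetricSpace Y] {f : X → Y}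
    {C r : ℝ} (hr : 0 ≤ r) (hf : ∀ x y, dist (f x) (f y) ≤ C * dist x y ^ r) :
    HolderWith C.toNNReal r.toNNReal f := by
  intro x y
  rw [edist_dist, edist_dist, Real.coe_toNNReal r hr, ENNReal.ofReal_rpow_of_nonneg dist_nonneg hr]
  change _ ≤ ENNReal.ofReal C * _
  rw [← ENNReal.ofReal_mul' (by positivity)]
  exact ENNReal.ofReal_le_ofReal (hf x y)

section FinSubdivision

variable {n : ℕ}

lemma clamp_eq_castSucc (i : Fin n) : Fin.clamp i n = i.castSucc :=
  Fin.ext (min_eq_left i.isLt.le)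

lemma clamp_add_one_eq_succ (i : Fin n) : Fin.clamp (i + 1) n = i.succ :=
  Fin.ext (min_eq_left i.isLt)

lemma isSubdivision_clamp {t : Fin (n + 1) → ℝ} (ht : Monotone t) :
    IsSubdivision (fun k => t (Fin.clamp k n)) n (t 0) (t (Fin.last n)) where
  monotone := ht.comp Fin.clamp_monotone
  zero_eq := congrArg t (Fin.ext (Nat.zero_min n))
  last_eq := congrArg t (Fin.clamp_eq_last n n le_rfl)

lemma incrementSum_clamp_eq_RSsum (f g : ℝ → ℝ) (t : Fin (n + 1) → ℝ) :
    incrementSum (fun x y => f x • (g y - g x)) (fun k => t (Fin.clamp k n)) n = RSsum f g n t := by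
  simp only [incrementSum, RSsum, Finset.sum_range, clamp_eq_castSucc, clamp_add_one_eq_succ,
    smul_eq_mul]

end FinSubdivision

theorem stieltjes_integral_exists_of_holder_general {f g : ℝ → ℝ} {Cf Cg β γ : ℝ≥0} {a b : ℝ}
    (hab : a ≤ b) (hf : HolderOnWith Cf β f (Set.Icc a b))
    (hg : HolderOnWith Cg γ g (Set.Icc a b)) (hβγ : (1 : ℝ) < β + γ) :
    ∃ I : ℝ, IsRSIntegral f g a b I := by
  obtain ⟨I, hI⟩ := (almostAdditiveOn_smul_sub hf hg).exists_norm_incrementSum_sub_le hβγ hab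
  refine ⟨I, fun ε hε => ?_⟩
  have herror := (tendsto_sewingConst_mul_rpow (Cf * Cg) hβγ (b - a)).eventually_lt_const hε
  obtain ⟨δ, hδε, hδ⟩ := ((herror.filter_mono nhdsWithin_le_nhds).and
    (eventually_mem_nhdsWithin (s := Set.Ioi 0))).exists
  refine ⟨δ, hδ, fun n t ht ha hb hmesh => ?_⟩
  rw [← Real.norm_eq_abs, ← incrementSum_clamp_eq_RSsum]
  refine (hI δ hδ n _ (ha ▸ hb ▸ isSubdivision_clamp ht) fun k hk => ?_).trans_lt hδε
  simpa only [← clamp_eq_castSucc, ← clamp_add_one_eq_succ] using (hmesh ⟨k, hk⟩).le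

/-- Young–Kondurar theorem: if `f` is `β`-Hölder and `g` is `γ`-Hölder with
`β + γ > 1`, then the Stieltjes integral `∫₀ᵗ f dg` exists for every `t > 0`. -/
theorem stieltjes_integral_exists_of_holder
    (f g : ℝ → ℝ) (β γ Cf Cg : ℝ)
    (hβ : 0 < β) (hβ1 : β ≤ 1) (hγ : 0 < γ) (hγ1 : γ ≤ 1)
    (hCf : 0 < Cf) (hCg : 0 < Cg)
    (hf : ∀ x y : ℝ, |f x - f y| ≤ Cf * |x - y| ^ β)
    (hg : ∀ x y : ℝ, |g x - g y| ≤ Cg * |x - y| ^ γ)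
    (hβγ : 1 < β + γ) :
    ∀ t : ℝ, 0 < t → ∃ I : ℝ, IsRSIntegral f g 0 t I :=
  fun _ ht => stieltjes_integral_exists_of_holder_general ht.le
    ((holderWith_toNNReal hβ.le hf).holderOnWith _) ((holderWith_toNNReal hγ.le hg).holderOnWith _)
    (by rwa [Real.coe_toNNReal β hβ.le, Real.coe_toNNReal γ hγ.le])
end

section
/- Let 1/2 < γ < 1, β > 1 − γ, T > 0, f ∈ C^β([0,T]), g ∈ C^γ([0,T]), e continuous, and u : [0,∞) × ℝ → ℝ with continuous ∂u/∂t and twice differentiable in x with bounded second derivative. Define η(t) = η(0) + ∫₀ᵗ e(s) ds + ∫₀ᵗ f(s) dg(s) (Young integral). Then v(t) = u(t, η(t)) satisfies the change of variables formula v(t) − v(0) = ∫₀ᵗ ∂u/∂t(s, η(s)) ds + ∫₀ᵗ ∂u/∂x(s, η(s)) dη(s), i.e. = ∫₀ᵗ [∂u/∂t(s,η(s)) + ∂u/∂x(s,η(s)) e(s)] ds + ∫₀ᵗ ∂u/∂x(s,η(s)) f(s) dg(s), with no second-order correction term. -/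
open Set Finset intervalIntegral

/- The Young-Loève estimate turns `η t = η a + ∫ e + ∫ f dg` into the uniform expansion
`η t - η s = e s * (t - s) + f s * (g t - g s) + o(t - s)`. This expansion is stable under the chain
rule: with `∂u/∂x` `α`-Hölder in `x`, the Taylor error is `O(|η t - η s| ^ (1 + α))`, hence
`o(t - s)` as soon as `(1 + α) * γ > 1`; for `α = 1` this is `γ > 1/2`, and it is why no
second-order term survives. Conversely, summing the expansion over a fine partition identifies the
integral against `g`, so no Hölder regularity in `t` of `∂u/∂x (t, η t)` is needed. -/

section

open Filter Topology Asymptotics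
open scoped NNReal Uniformity

section RiemannStieltjes

variable {f g : ℝ → ℝ} {a b c δ I J S S' : ℝ}

/-- `IsMeshSum f g δ a b S`: the number `S` is a left-endpoint sum of `∫ f dg` over some partition
of `[a, b]` of mesh smaller than `δ`. An inductive counterpart of `RSsum`, in which the
concatenation of partitions needs no indices. -/
inductive IsMeshSum (f g : ℝ → ℝ) (δ a : ℝ) : ℝ → ℝ → Prop
  | nil : IsMeshSum f g δ a a 0
  | snoc {b c S : ℝ} : IsMeshSum f g δ a b S → b ≤ c → c - b < δ →
      IsMeshSum f g δ a c (S + f b * (g c - g b))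

theorem IsMeshSum.of_sub_lt (hab : a ≤ b) (hδ : b - a < δ) :
    IsMeshSum f g δ a b (f a * (g b - g a)) := by
  simpa only [zero_add] using IsMeshSum.nil.snoc hab hδ

theorem IsMeshSum.le (h : IsMeshSum f g δ a b S) : a ≤ b := by
  induction h with
  | nil => exact le_rfl
  | snoc _ hle _ ih => exact ih.trans hle

theorem IsMeshSum.trans (h : IsMeshSum f g δ a b S) (h' : IsMeshSum f g δ b c S') :
    IsMeshSum f g δ a c (S + S') := by
  induction h' with
  | nil => rwa [add_zero]
  | snoc _ hle hlt ih => simpa only [add_assoc] using ih.snoc hle hlt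

theorem IsMeshSum.mono {δ' : ℝ} (h : IsMeshSum f g δ a b S) (hδ : δ ≤ δ') :
    IsMeshSum f g δ' a b S := by
  induction h with
  | nil => exact .nil
  | snoc _ hle hlt ih => exact ih.snoc hle (hlt.trans_le hδ)

theorem isMeshSum_RSsum {n : ℕ} {t : Fin (n + 1) → ℝ} (ht : Monotone t)
    (hδ : ∀ i : Fin n, t i.succ - t i.castSucc < δ) :
    IsMeshSum f g δ (t 0) (t (Fin.last n)) (RSsum f g n t) := by
  induction n with
  | zero => rw [RSsum, Fin.sum_univ_zero]; exact .nil
  | succ n ih =>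
    have hinit := ih (t := t ∘ Fin.castSucc) (ht.comp Fin.strictMono_castSucc.monotone)
      fun i => hδ i.castSucc
    rw [RSsum, Fin.sum_univ_castSucc]
    exact hinit.snoc (ht (Fin.last n).castSucc_le_succ) (hδ (Fin.last n))

theorem IsMeshSum.exists_RSsum_eq (h : IsMeshSum f g δ a b S) :
    ∃ (n : ℕ) (t : Fin (n + 1) → ℝ), Monotone t ∧ t 0 = a ∧ t (Fin.last n) = b ∧
      (∀ i : Fin n, t i.succ - t i.castSucc < δ) ∧ RSsum f g n t = S := by
  induction h with
  | nil =>
    exact ⟨0, fun _ => a, monotone_const, rfl, rfl, fun i => i.elim0, Fin.sum_univ_zero _⟩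
  | @snoc b c S _ hbc hδ ih =>
    obtain ⟨n, t, ht, rfl, rfl, htδ, rfl⟩ := ih
    refine ⟨n + 1, Fin.snoc t c, Fin.monotone_iff_le_succ.2 fun i => ?_, ?_, by simp,
      fun i => ?_, ?_⟩
    · refine i.lastCases ?_ fun i => ?_
      · simpa using hbc
      · rw [Fin.succ_castSucc, Fin.snoc_castSucc, Fin.snoc_castSucc]
        exact ht i.castSucc_le_succ
    · exact Fin.snoc_castSucc (α := fun _ => ℝ) (i := (0 : Fin (n + 1))) ..
    · refine i.lastCases ?_ fun i => ?_
      · simpa using hδ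
      · rw [Fin.succ_castSucc, Fin.snoc_castSucc, Fin.snoc_castSucc]
        exact htδ i
    · simp [RSsum, Fin.sum_univ_castSucc, Fin.succ_castSucc, -Fin.castSucc_succ]

theorem isRSIntegral_iff_isMeshSum :
    IsRSIntegral f g a b I ↔ ∀ ε > 0, ∃ δ > 0, ∀ S, IsMeshSum f g δ a b S → |S - I| < ε := by
  refine forall₂_congr fun ε _ => exists_congr fun δ => and_congr_right fun _ => ⟨?_, ?_⟩
  · rintro h S hS
    obtain ⟨n, t, ht, h0, hn, hδ, rfl⟩ := hS.exists_RSsum_eq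
    exact h n t ht h0 hn hδ
  · rintro h n t ht rfl rfl hδ
    exact h _ (isMeshSum_RSsum ht hδ)

theorem midpoint_induction {P : ℝ → ℝ → Prop} (hδ : 0 < δ)
    (short : ∀ s t, s ≤ t → t - s < δ → P s t)
    (join : ∀ s t, s ≤ t → P s ((s + t) / 2) → P ((s + t) / 2) t → P s t) (hab : a ≤ b) :
    P a b := by
  obtain ⟨k, hk⟩ := pow_unbounded_of_one_lt ((b - a) / δ) one_lt_two
  rw [div_lt_iff₀ hδ] at hk
  induction k generalizing a b with
  | zero => exact short a b hab (by simpa using hk)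
  | succ k ih =>
    rw [pow_succ] at hk
    exact join a b hab (ih (by linarith) (by linarith)) (ih (by linarith) (by linarith))

theorem exists_isMeshSum (f g : ℝ → ℝ) (hδ : 0 < δ) (hab : a ≤ b) : ∃ S, IsMeshSum f g δ a b S :=
  midpoint_induction (P := fun s t => ∃ S, IsMeshSum f g δ s t S) hδ
    (fun _ _ hst h => ⟨_, .of_sub_lt hst h⟩)
    (fun _ _ _ ⟨_, hS⟩ ⟨_, hS'⟩ => ⟨_, hS.trans hS'⟩) hab

theorem IsRSIntegral.sub (hI : IsRSIntegral f g a b I) (hJ : IsRSIntegral f g a c J)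
    (hab : a ≤ b) : IsRSIntegral f g b c (J - I) := by
  rw [isRSIntegral_iff_isMeshSum] at *
  intro ε hε
  obtain ⟨δ₁, hδ₁, hI⟩ := hI (ε / 2) (half_pos hε)
  obtain ⟨δ₂, hδ₂, hJ⟩ := hJ (ε / 2) (half_pos hε)
  refine ⟨min δ₁ δ₂, lt_min hδ₁ hδ₂, fun S hS => ?_⟩
  obtain ⟨S₀, hS₀⟩ := exists_isMeshSum f g (lt_min hδ₁ hδ₂) hab
  have hleft := hI S₀ (hS₀.mono (min_le_left ..))
  have htotal := hJ (S₀ + S) ((hS₀.trans hS).mono (min_le_right ..))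
  rw [abs_lt] at *
  constructor <;> linarith

section YoungLoeve

variable {β γ Cf Cg : ℝ≥0}

/-- The Young-Loève constant, for integrands and integrators with Hölder constants `Cf` and `Cg`
and total Hölder exponent `θ`. -/
noncomputable def youngConst (Cf Cg : ℝ≥0) (θ : ℝ) : ℝ := Cf * Cg / (2 ^ θ - 2)

theorem two_lt_two_rpow {θ : ℝ} (hθ : 1 < θ) : (2 : ℝ) < 2 ^ θ := by
  simpa only [Real.rpow_one] using Real.rpow_lt_rpow_of_exponent_lt one_lt_two hθ

theorem youngConst_nonneg {θ : ℝ} (hθ : 1 < θ) : 0 ≤ youngConst Cf Cg θ :=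
  div_nonneg (by positivity) (sub_nonneg.2 (two_lt_two_rpow hθ).le)

theorem two_mul_youngConst_add_mul {θ : ℝ} (hθ : 1 < θ) :
    2 * youngConst Cf Cg θ + Cf * Cg = youngConst Cf Cg θ * 2 ^ θ := by
  have : (2 : ℝ) ^ θ - 2 ≠ 0 := (sub_pos.2 (two_lt_two_rpow hθ)).ne'
  rw [youngConst]; field_simp; ring

theorem abs_add_sub_le_of_midpoint {C s t : ℝ} (hst : s ≤ t)
    (hf : HolderOnWith Cf β f (Set.Icc s t)) (hg : HolderOnWith Cg γ g (Set.Icc s t))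
    (hS : |S - f s * (g ((s + t) / 2) - g s)| ≤ C)
    (hS' : |S' - f ((s + t) / 2) * (g t - g ((s + t) / 2))| ≤ C) :
    |S + S' - f s * (g t - g s)| ≤ 2 * C + Cf * Cg * ((t - s) / 2) ^ (β + γ : ℝ) := by
  set m := (s + t) / 2 with hm
  have hfm : |f m - f s| ≤ Cf * ((t - s) / 2) ^ (β : ℝ) :=
    hf.dist_le_of_le ⟨by linarith, by linarith⟩ (Set.left_mem_Icc.2 hst)
      (by rw [Real.dist_eq, abs_of_nonneg] <;> linarith)
  have hgm : |g t - g m| ≤ Cg * ((t - s) / 2) ^ (γ : ℝ) :=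
    hg.dist_le_of_le (Set.right_mem_Icc.2 hst) ⟨by linarith, by linarith⟩
      (by rw [Real.dist_eq, abs_of_nonneg] <;> linarith)
  calc |S + S' - f s * (g t - g s)|
      = |(S - f s * (g m - g s)) + (S' - f m * (g t - g m)) + (f m - f s) * (g t - g m)| := by
        congr 1; ring
    _ ≤ |S - f s * (g m - g s)| + |S' - f m * (g t - g m)| + |f m - f s| * |g t - g m| := by
        rw [← abs_mul]; exact abs_add_three _ _ _
    _ ≤ C + C + Cf * ((t - s) / 2) ^ (β : ℝ) * (Cg * ((t - s) / 2) ^ (γ : ℝ)) := by gcongr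
    _ = 2 * C + Cf * Cg * ((t - s) / 2) ^ (β + γ : ℝ) := by
        rw [Real.rpow_add_of_nonneg (by linarith) β.coe_nonneg γ.coe_nonneg]; ring

/- Bisection gives the recursion `C * 2 ^ θ = 2 * C + Cf * Cg` for the constant of the remainder,
and `youngConst` is its fixed point. -/
theorem exists_isMeshSum_abs_sub_le (hθ : 1 < β + γ) (hf : HolderOnWith Cf β f (Set.Icc a b))
    (hg : HolderOnWith Cg γ g (Set.Icc a b)) (hδ : 0 < δ) (hab : a ≤ b) :
    ∃ S, IsMeshSum f g δ a b S ∧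
      |S - f a * (g b - g a)| ≤ youngConst Cf Cg (β + γ) * (b - a) ^ (β + γ : ℝ) := by
  have hθ' : (1 : ℝ) < β + γ := mod_cast hθ
  refine midpoint_induction (P := fun s t => a ≤ s → t ≤ b → ∃ S, IsMeshSum f g δ s t S ∧
    |S - f s * (g t - g s)| ≤ youngConst Cf Cg (β + γ) * (t - s) ^ (β + γ : ℝ)) hδ
    (fun s t hst hlt _ _ => ⟨_, .of_sub_lt hst hlt, ?_⟩)
    (fun s t hst hleft hright hs ht => ?_) hab le_rfl le_rfl
  · rw [sub_self, abs_zero]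
    exact mul_nonneg (youngConst_nonneg hθ') (Real.rpow_nonneg (sub_nonneg.2 hst) _)
  · obtain ⟨S, hS, hS_le⟩ := hleft hs (by linarith)
    obtain ⟨S', hS', hS'_le⟩ := hright (by linarith) ht
    refine ⟨S + S', hS.trans hS', ?_⟩
    rw [show (s + t) / 2 - s = (t - s) / 2 by ring] at hS_le
    rw [show t - (s + t) / 2 = (t - s) / 2 by ring] at hS'_le
    have hsub : Set.Icc s t ⊆ Set.Icc a b := Set.Icc_subset_Icc hs ht
    refine (abs_add_sub_le_of_midpoint hst (hf.mono hsub) (hg.mono hsub) hS_le hS'_le).trans_eq ?_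
    rw [← mul_assoc, ← add_mul, two_mul_youngConst_add_mul hθ', mul_assoc,
      ← Real.mul_rpow zero_le_two (by linarith), mul_div_cancel₀ _ two_ne_zero]

theorem IsRSIntegral.abs_sub_mul_sub_le (hI : IsRSIntegral f g a b I) (hθ : 1 < β + γ)
    (hf : HolderOnWith Cf β f (Set.Icc a b)) (hg : HolderOnWith Cg γ g (Set.Icc a b))
    (hab : a ≤ b) :
    |I - f a * (g b - g a)| ≤ youngConst Cf Cg (β + γ) * (b - a) ^ (β + γ : ℝ) := by
  refine le_of_forall_pos_le_add fun ε hε => ?_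
  obtain ⟨δ, hδ, hI⟩ := isRSIntegral_iff_isMeshSum.1 hI ε hε
  obtain ⟨S, hS, hS_le⟩ := exists_isMeshSum_abs_sub_le hθ hf hg hδ hab
  calc |I - f a * (g b - g a)| ≤ |I - S| + |S - f a * (g b - g a)| :=
        abs_sub_le ..
    _ ≤ _ := by rw [abs_sub_comm I, add_comm]; gcongr; exact (hI S hS).le

end YoungLoeve

end RiemannStieltjes

section ShortSubintervals

variable {E X : Type*} {a b : ℝ}

/-- The filter of pairs `a ≤ s ≤ t ≤ b` with `t - s → 0`, uniformly in the position of `s`.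
Along it `R =o[shortSubintervals a b] fun p => p.2 - p.1` says that the two-parameter remainder
`R (s, t)` is uniformly `o(t - s)`. -/
def shortSubintervals (a b : ℝ) : Filter (ℝ × ℝ) :=
  𝓤 ℝ ⊓ 𝓟 {p | a ≤ p.1 ∧ p.1 ≤ p.2 ∧ p.2 ≤ b}

theorem eventually_shortSubintervals_iff {P : ℝ × ℝ → Prop} :
    (∀ᶠ p in shortSubintervals a b, P p) ↔
      ∃ δ > 0, ∀ s t, a ≤ s → s ≤ t → t ≤ b → t - s < δ → P (s, t) := by
  rw [shortSubintervals, eventually_inf_principal,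
    Metric.uniformity_basis_dist.eventually_iff]
  refine exists_congr fun δ => and_congr_right fun _ => ⟨fun h s t has hst htb hδ => ?_, ?_⟩
  · exact h (show dist s t < δ by rwa [dist_comm, Real.dist_eq, abs_of_nonneg (sub_nonneg.2 hst)])
      ⟨has, hst, htb⟩
  · rintro h ⟨s, t⟩ hdist ⟨has, hst, htb⟩
    exact h s t has hst htb ((le_abs_self _).trans_lt (by rwa [abs_sub_comm]))

theorem eventually_mem_shortSubintervals (a b : ℝ) :
    ∀ᶠ p in shortSubintervals a b, a ≤ p.1 ∧ p.1 ≤ p.2 ∧ p.2 ≤ b :=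
  mem_inf_of_right (mem_principal_self _)

theorem shortSubintervals_mono_right {c : ℝ} (hcb : c ≤ b) :
    shortSubintervals a c ≤ shortSubintervals a b :=
  inf_le_inf_left _ (principal_mono.2 fun _ h => ⟨h.1, h.2.1, h.2.2.trans hcb⟩)

theorem tendsto_sub_shortSubintervals (a b : ℝ) :
    Tendsto (fun p : ℝ × ℝ => p.2 - p.1) (shortSubintervals a b) (𝓝[≥] 0) := by
  refine tendsto_nhdsWithin_iff.2 ⟨Metric.tendsto_nhds.2 fun ε hε => ?_,
    (eventually_mem_shortSubintervals a b).mono fun p hp => sub_nonneg.2 hp.2.1⟩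
  refine eventually_shortSubintervals_iff.2 ⟨ε, hε, fun s t _ hst _ hlt => ?_⟩
  rwa [Real.dist_eq, sub_zero, abs_of_nonneg (sub_nonneg.2 hst)]

theorem isLittleO_rpow_sub_shortSubintervals {θ : ℝ} (hθ : 1 < θ) :
    (fun p => (p.2 - p.1) ^ θ) =o[shortSubintervals a b] fun p => p.2 - p.1 := by
  have hsmall : Tendsto (fun x : ℝ => x ^ (θ - 1)) (𝓝[≥] 0) (𝓝 0) :=
    (tendsto_id.mono_left inf_le_left).rpow_const_nhds_zero (by linarith)
  have hprod : (fun x : ℝ => x ^ θ) =ᶠ[𝓝[≥] 0] fun x => x ^ (θ - 1) * x := by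
    filter_upwards [self_mem_nhdsWithin] with x hx
    rw [← Real.rpow_add_one' hx (by linarith), sub_add_cancel]
  have hlittle : (fun x : ℝ => x ^ θ) =o[𝓝[≥] 0] fun x => x := by
    simpa only [one_mul] using hprod.trans_isLittleO
      (((isLittleO_one_iff ℝ).2 hsmall).mul_isBigO (isBigO_refl _ _))
  exact hlittle.comp_tendsto (tendsto_sub_shortSubintervals a b)

theorem isLittleO_shortSubintervals_iff [NormedAddCommGroup E] {R : ℝ × ℝ → E} :
    R =o[shortSubintervals a b] (fun p => p.2 - p.1) ↔
      ∀ ε > 0, ∃ δ > 0, ∀ s t, a ≤ s → s ≤ t → t ≤ b → t - s < δ → ‖R (s, t)‖ ≤ ε * (t - s) := by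
  simp only [isLittleO_iff, eventually_shortSubintervals_iff]
  refine forall₂_congr fun ε _ => exists_congr fun δ => and_congr_right fun _ =>
    forall₅_congr fun s t _ hst _ => forall_congr' fun _ => ?_
  rw [Real.norm_of_nonneg (sub_nonneg.2 hst)]

theorem isBigO_sub_of_holderOnWith [NormedAddCommGroup E] {C r : ℝ≥0} {f : ℝ → E}
    (hf : HolderOnWith C r f (Set.Icc a b)) :
    (fun p => f p.2 - f p.1) =O[shortSubintervals a b] fun p => (p.2 - p.1) ^ (r : ℝ) := by
  refine .of_bound C ?_
  filter_upwards [eventually_mem_shortSubintervals a b] with ⟨s, t⟩ ⟨has, hst, htb⟩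
  have h := hf.dist_le (x := t) (y := s) ⟨has.trans hst, htb⟩ ⟨has, hst.trans htb⟩
  rwa [dist_eq_norm, Real.dist_eq, abs_of_nonneg (sub_nonneg.2 hst),
    ← Real.norm_of_nonneg (Real.rpow_nonneg (sub_nonneg.2 hst) _)] at h

theorem isBigO_one_fst_of_continuousOn [NormedAddCommGroup E] {f : ℝ → E}
    (hf : ContinuousOn f (Set.Icc a b)) :
    (fun p => f p.1) =O[shortSubintervals a b] fun _ => (1 : ℝ) := by
  obtain ⟨C, hC⟩ := isCompact_Icc.exists_bound_of_continuousOn hf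
  refine .of_bound C ?_
  filter_upwards [eventually_mem_shortSubintervals a b] with ⟨s, t⟩ ⟨has, hst, htb⟩
  simpa only [norm_one, mul_one] using hC s ⟨has, hst.trans htb⟩

theorem continuousOn_of_tendsto_dist_shortSubintervals [PseudoMetricSpace X] {f : ℝ → X}
    (hf : Tendsto (fun p => dist (f p.1) (f p.2)) (shortSubintervals a b) (𝓝 0)) :
    ContinuousOn f (Set.Icc a b) := by
  refine Metric.continuousOn_iff.2 fun s hs ε hε => ?_
  obtain ⟨δ, hδ, h⟩ := eventually_shortSubintervals_iff.1 (hf.eventually_lt_const hε)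
  refine ⟨δ, hδ, fun t ht hts => ?_⟩
  rw [Real.dist_eq] at hts
  rcases le_total s t with hst | hst
  · rw [dist_comm]
    exact h s t hs.1 hst ht.2 ((le_abs_self _).trans_lt hts)
  · exact h t s ht.1 hst hs.2 ((le_abs_self _).trans_lt (by rwa [abs_sub_comm]))

theorem eventually_dist_diag_lt_of_continuousOn [PseudoMetricSpace X] {G : ℝ × ℝ → X}
    (hG : ContinuousOn G (Set.Icc a b ×ˢ Set.Icc a b)) {ε : ℝ} (hε : 0 < ε) :
    ∀ᶠ p in shortSubintervals a b, ∀ r ∈ Set.Icc p.1 p.2, ∀ w ∈ Set.Icc p.1 p.2,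
      dist (G (r, w)) (G (p.1, p.1)) < ε := by
  obtain ⟨δ, hδ, h⟩ := Metric.uniformContinuousOn_iff.1
    ((isCompact_Icc.prod isCompact_Icc).uniformContinuousOn_of_continuous hG) ε hε
  refine eventually_shortSubintervals_iff.2 ⟨δ, hδ, fun s t has hst htb hlt r hr w hw => ?_⟩
  have hsub : Set.Icc s t ⊆ Set.Icc a b := Set.Icc_subset_Icc has htb
  have hdist : ∀ x ∈ Set.Icc s t, dist x s < δ := fun x hx => by
    rw [Real.dist_eq, abs_of_nonneg (sub_nonneg.2 hx.1)]
    linarith [hx.2]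
  have hs : s ∈ Set.Icc a b := hsub (Set.left_mem_Icc.2 hst)
  exact h _ ⟨hsub hr, hsub hw⟩ _ ⟨hs, hs⟩ (max_lt (hdist r hr) (hdist w hw))

end ShortSubintervals

section LocalExpansions

variable {E X : Type*} [NormedAddCommGroup E] [NormedSpace ℝ E] {a b : ℝ} {M α : ℝ≥0}

theorem isLittleO_integral_sub_smul [CompleteSpace E] {k : ℝ → E}
    (hk : ContinuousOn k (Set.Icc a b)) :
    (fun p => (∫ r in p.1..p.2, k r) - (p.2 - p.1) • k p.1)
      =o[shortSubintervals a b] fun p => p.2 - p.1 := by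
  refine isLittleO_iff.2 fun ε hε => ?_
  have hG : ContinuousOn (fun q : ℝ × ℝ => k q.1) (Set.Icc a b ×ˢ Set.Icc a b) :=
    hk.comp continuousOn_fst fun q hq => hq.1
  filter_upwards [eventually_mem_shortSubintervals a b,
    eventually_dist_diag_lt_of_continuousOn hG hε] with ⟨s, t⟩ ⟨has, hst, htb⟩ hclose
  have hint : IntervalIntegrable k MeasureTheory.volume s t :=
    (hk.mono (Set.Icc_subset_Icc has htb)).intervalIntegrable_of_Icc hst
  rw [← integral_const, ← integral_sub hint intervalIntegrable_const]
  refine norm_integral_le_of_norm_le_const fun r hr => ?_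
  rw [Set.uIoc_of_le hst] at hr
  rw [← dist_eq_norm]
  exact (hclose r ⟨hr.1.le, hr.2⟩ s (Set.left_mem_Icc.2 hst)).le

theorem isLittleO_sub_sub_smul_of_hasDerivAt {u ut : ℝ → ℝ → E} {η : ℝ → ℝ}
    (hut : ∀ t x, HasDerivAt (fun s => u s x) (ut t x) t)
    (hutc : Continuous fun p : ℝ × ℝ => ut p.1 p.2) (hη : ContinuousOn η (Set.Icc a b)) :
    (fun p => u p.2 (η p.2) - u p.1 (η p.2) - (p.2 - p.1) • ut p.1 (η p.1))
      =o[shortSubintervals a b] fun p => p.2 - p.1 := by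
  refine isLittleO_iff.2 fun ε hε => ?_
  have hG : ContinuousOn (fun q : ℝ × ℝ => ut q.1 (η q.2)) (Set.Icc a b ×ˢ Set.Icc a b) :=
    hutc.comp_continuousOn (continuousOn_fst.prodMk
      (hη.comp continuousOn_snd fun q hq => hq.2))
  filter_upwards [eventually_mem_shortSubintervals a b,
    eventually_dist_diag_lt_of_continuousOn hG hε] with ⟨s, t⟩ ⟨_, hst, _⟩ hclose
  have hderiv : ∀ r ∈ Set.Icc s t, HasDerivWithinAt (fun r => u r (η t) - r • ut s (η s))
      (ut r (η t) - (1 : ℝ) • ut s (η s)) (Set.Icc s t) r := fun r _ =>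
    ((hut r (η t)).sub ((hasDerivAt_id' r).smul_const _)).hasDerivWithinAt
  have hbound : ∀ r ∈ Set.Icc s t, ‖ut r (η t) - (1 : ℝ) • ut s (η s)‖ ≤ ε := fun r hr => by
    rw [one_smul, ← dist_eq_norm]
    exact (hclose r hr t (Set.right_mem_Icc.2 hst)).le
  have hmvt := (convex_Icc s t).norm_image_sub_le_of_norm_hasDerivWithin_le hderiv hbound
    (Set.left_mem_Icc.2 hst) (Set.right_mem_Icc.2 hst)
  convert hmvt using 2
  module

theorem norm_sub_sub_smul_le_of_holderWith {F F' : ℝ → E}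
    (hF : ∀ x, HasDerivAt F (F' x) x) (hF' : HolderWith M α F') (x y : ℝ) :
    ‖F y - F x - (y - x) • F' x‖ ≤ M * |y - x| ^ (1 + α : ℝ) := by
  have hderiv : ∀ z ∈ Set.uIcc x y, HasDerivWithinAt (fun z => F z - z • F' x)
      (F' z - (1 : ℝ) • F' x) (Set.uIcc x y) z := fun z _ =>
    ((hF z).sub ((hasDerivAt_id' z).smul_const _)).hasDerivWithinAt
  have hbound : ∀ z ∈ Set.uIcc x y, ‖F' z - (1 : ℝ) • F' x‖ ≤ M * |y - x| ^ (α : ℝ) :=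
    fun z hz => by
      rw [one_smul, ← dist_eq_norm]
      exact hF'.dist_le_of_le (Set.abs_sub_left_of_mem_uIcc hz)
  have hmvt := (convex_uIcc x y).norm_image_sub_le_of_norm_hasDerivWithin_le hderiv hbound
    Set.left_mem_uIcc Set.right_mem_uIcc
  calc ‖F y - F x - (y - x) • F' x‖ = ‖F y - y • F' x - (F x - x • F' x)‖ := by
        congr 1; module
    _ ≤ M * |y - x| ^ (α : ℝ) * |y - x| := hmvt
    _ = M * |y - x| ^ (1 + α : ℝ) := by
        rw [Real.rpow_one_add' (abs_nonneg _) (by positivity)]; ring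

theorem norm_sub_inv_smul_sub_le_of_holderWith {F F' : ℝ → E}
    (hF : ∀ x, HasDerivAt F (F' x) x) (hF' : HolderWith M α F') {x y h : ℝ} (hh : 0 < h)
    (hy : |y - x| ≤ h) :
    ‖F' y - h⁻¹ • (F (x + h) - F x)‖ ≤ 2 * M * h ^ (α : ℝ) := by
  have hbase : ‖F' y - F' x‖ ≤ M * h ^ (α : ℝ) := by
    rw [← dist_eq_norm]
    exact hF'.dist_le_of_le hy
  have hquot : ‖F' x - h⁻¹ • (F (x + h) - F x)‖ ≤ M * h ^ (α : ℝ) := by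
    have htaylor := norm_sub_sub_smul_le_of_holderWith hF hF' x (x + h)
    rw [add_sub_cancel_left, abs_of_pos hh, Real.rpow_one_add' hh.le (by positivity)] at htaylor
    calc ‖F' x - h⁻¹ • (F (x + h) - F x)‖
        = ‖h⁻¹ • (F (x + h) - F x - h • F' x)‖ := by
          rw [smul_sub _ _ (h • _), inv_smul_smul₀ hh.ne', norm_sub_rev]
      _ ≤ h⁻¹ * (M * (h * h ^ (α : ℝ))) := by
          rw [norm_smul, norm_inv, Real.norm_of_nonneg hh.le]; gcongr
      _ = M * h ^ (α : ℝ) := by field_simp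
  calc _ ≤ ‖F' y - F' x‖ + ‖F' x - h⁻¹ • (F (x + h) - F x)‖ := norm_sub_le_norm_sub_add_norm_sub ..
    _ ≤ 2 * M * h ^ (α : ℝ) := by linarith

theorem continuous_deriv_of_holderWith [TopologicalSpace X] {u ux : X → ℝ → E}
    (hα : 0 < α) (hu : ∀ x, Continuous fun t => u t x)
    (hux : ∀ t x, HasDerivAt (u t) (ux t x) x) (huxH : ∀ t, HolderWith M α (ux t)) :
    Continuous fun p : X × ℝ => ux p.1 p.2 := by
  refine continuous_of_locally_uniform_approx_of_continuousAt fun ⟨t₀, x⟩ V hV => ?_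
  obtain ⟨ε, hε, hεV⟩ := Metric.mem_uniformity_dist.1 hV
  have hsmall : ∀ᶠ h in 𝓝[>] (0 : ℝ), 2 * M * h ^ (α : ℝ) < ε := by
    have := ((tendsto_id.mono_left inf_le_left).rpow_const_nhds_zero (l := 𝓝[>] (0 : ℝ))
      (NNReal.coe_pos.2 hα)).const_mul (2 * M : ℝ)
    rw [mul_zero] at this
    exact this.eventually_lt_const hε
  obtain ⟨h, hhε, hh⟩ := (hsmall.and self_mem_nhdsWithin).exists
  refine ⟨Prod.snd ⁻¹' Metric.closedBall x h,
    continuous_snd.continuousAt.preimage_mem_nhds (Metric.closedBall_mem_nhds x hh),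
    fun p => h⁻¹ • (u p.1 (x + h) - u p.1 x), ?_, fun p hp => hεV ?_⟩
  · have := hu (x + h)
    have := hu x
    fun_prop
  · rw [dist_eq_norm]
    exact (norm_sub_inv_smul_sub_le_of_holderWith (hux p.1) (huxH p.1) hh hp).trans_lt hhε

end LocalExpansions

section Sewing

variable {h g Φ : ℝ → ℝ} {a b δ ε S : ℝ}

theorem IsMeshSum.abs_sub_sub_le (hS : IsMeshSum h g δ a b S)
    (hΦ : ∀ s t, a ≤ s → s ≤ t → t ≤ b → t - s < δ →
      |h s * (g t - g s) - (Φ t - Φ s)| ≤ ε * (t - s)) :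
    |S - (Φ b - Φ a)| ≤ ε * (b - a) := by
  induction hS with
  | nil => simp
  | @snoc b c S hS hbc hδ ih =>
    have hS_le := ih fun s t has hst htb => hΦ s t has hst (htb.trans hbc)
    calc |S + h b * (g c - g b) - (Φ c - Φ a)|
        = |(S - (Φ b - Φ a)) + (h b * (g c - g b) - (Φ c - Φ b))| := by congr 1; ring
      _ ≤ |S - (Φ b - Φ a)| + |h b * (g c - g b) - (Φ c - Φ b)| := abs_add_le _ _
      _ ≤ ε * (b - a) + ε * (c - b) := add_le_add hS_le (hΦ b c hS.le hbc le_rfl hδ)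
      _ = ε * (c - a) := by ring

theorem isRSIntegral_of_isLittleO
    (hΦ : (fun p => h p.1 * (g p.2 - g p.1) - (Φ p.2 - Φ p.1))
      =o[shortSubintervals a b] fun p => p.2 - p.1) :
    IsRSIntegral h g a b (Φ b - Φ a) := by
  refine isRSIntegral_iff_isMeshSum.2 fun ε hε => ?_
  have hlen : 0 < |b - a| + 1 := by positivity
  obtain ⟨δ, hδ, hbound⟩ := isLittleO_shortSubintervals_iff.1 hΦ (ε / (|b - a| + 1)) (by positivity)
  refine ⟨δ, hδ, fun S hS => ?_⟩
  calc |S - (Φ b - Φ a)| ≤ ε / (|b - a| + 1) * (b - a) := hS.abs_sub_sub_le hbound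
    _ < ε / (|b - a| + 1) * (|b - a| + 1) := by
        gcongr; exact (le_abs_self _).trans_lt (lt_add_one _)
    _ = ε := div_mul_cancel₀ _ hlen.ne'

end Sewing

section YoungDifferential

variable {e f g h k v η : ℝ → ℝ} {a b : ℝ} {β γ Cf Cg : ℝ≥0}

/-- `HasYoungDifferential η e f g a b`: `dη = e dt + f dg` on `[a, b]`, in the sense that increments
of `η` agree with `e s * (t - s) + f s * (g t - g s)` up to a uniform `o(t - s)`. -/
def HasYoungDifferential (η e f g : ℝ → ℝ) (a b : ℝ) : Prop :=
  (fun p => η p.2 - η p.1 - (p.2 - p.1) * e p.1 - f p.1 * (g p.2 - g p.1))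
    =o[shortSubintervals a b] fun p => p.2 - p.1

theorem integral_sub_of_continuousOn (he : ContinuousOn e (Set.Icc a b)) {s t : ℝ} (has : a ≤ s)
    (hst : s ≤ t) (htb : t ≤ b) : (∫ r in a..t, e r) - ∫ r in a..s, e r = ∫ r in s..t, e r :=
  have hint : ∀ r ∈ Set.Icc a b, IntervalIntegrable e MeasureTheory.volume a r := fun _ hr =>
    (he.mono (Set.Icc_subset_Icc_right hr.2)).intervalIntegrable_of_Icc hr.1
  integral_interval_sub_left (hint t ⟨has.trans hst, htb⟩) (hint s ⟨has, hst.trans htb⟩)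

theorem hasYoungDifferential_of_isRSIntegral (hθ : 1 < β + γ)
    (he : ContinuousOn e (Set.Icc a b)) (hf : HolderOnWith Cf β f (Set.Icc a b))
    (hg : HolderOnWith Cg γ g (Set.Icc a b))
    (hη : ∀ t ∈ Set.Icc a b, ∃ I, IsRSIntegral f g a t I ∧ η t = η a + (∫ s in a..t, e s) + I) :
    HasYoungDifferential η e f g a b := by
  have hyoung : (fun p => (η p.2 - η p.1 - ∫ r in p.1..p.2, e r) - f p.1 * (g p.2 - g p.1))
      =o[shortSubintervals a b] fun p => p.2 - p.1 := by
    refine IsBigO.trans_isLittleO (.of_bound (youngConst Cf Cg (β + γ)) ?_)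
      (isLittleO_rpow_sub_shortSubintervals (θ := β + γ) (mod_cast hθ))
    filter_upwards [eventually_mem_shortSubintervals a b] with ⟨s, t⟩ ⟨has, hst, htb⟩
    obtain ⟨I, hI, hηs⟩ := hη s ⟨has, hst.trans htb⟩
    obtain ⟨J, hJ, hηt⟩ := hη t ⟨has.trans hst, htb⟩
    have hsplit := integral_sub_of_continuousOn he has hst htb
    have hsub : Set.Icc s t ⊆ Set.Icc a b := Set.Icc_subset_Icc has htb
    have hincr : η t - η s - ∫ r in s..t, e r = J - I := by rw [hηs, hηt, ← hsplit]; ring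
    rw [hincr, Real.norm_of_nonneg (Real.rpow_nonneg (sub_nonneg.2 hst) _)]
    exact (hI.sub hJ has).abs_sub_mul_sub_le hθ (hf.mono hsub) (hg.mono hsub) hst
  refine (hyoung.add (isLittleO_integral_sub_smul he)).congr_left fun p => ?_
  rw [smul_eq_mul]; ring

theorem HasYoungDifferential.isRSIntegral (hv : HasYoungDifferential v k h g a b)
    (hk : ContinuousOn k (Set.Icc a b)) :
    IsRSIntegral h g a b (v b - v a - ∫ s in a..b, k s) := by
  have hremainder := (isLittleO_integral_sub_smul hk).sub hv
  convert isRSIntegral_of_isLittleO (Φ := fun t => v t - ∫ s in a..t, k s)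
    (hremainder.congr' ?_ .rfl) using 1
  · rw [integral_same]; ring
  · filter_upwards [eventually_mem_shortSubintervals a b] with ⟨s, t⟩ ⟨has, hst, htb⟩
    rw [← integral_sub_of_continuousOn hk has hst htb, smul_eq_mul]; ring

theorem HasYoungDifferential.mono_right {c : ℝ} (hv : HasYoungDifferential v k h g a b)
    (hcb : c ≤ b) : HasYoungDifferential v k h g a c :=
  hv.mono (shortSubintervals_mono_right hcb)

theorem HasYoungDifferential.isBigO_rpow_sub (hη : HasYoungDifferential η e f g a b) (hγ : γ ≤ 1)
    (he : ContinuousOn e (Set.Icc a b)) (hf : ContinuousOn f (Set.Icc a b))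
    (hg : HolderOnWith Cg γ g (Set.Icc a b)) :
    (fun p => η p.2 - η p.1) =O[shortSubintervals a b] fun p => (p.2 - p.1) ^ (γ : ℝ) := by
  have hlen : (fun p : ℝ × ℝ => p.2 - p.1) =O[shortSubintervals a b]
      fun p => (p.2 - p.1) ^ (γ : ℝ) :=
    (IsBigO.id_rpow_of_le_one (mod_cast hγ)).comp_tendsto (tendsto_sub_shortSubintervals a b)
  have hdrift := hlen.mul (isBigO_one_fst_of_continuousOn he)
  have hnoise := (isBigO_one_fst_of_continuousOn hf).mul (isBigO_sub_of_holderOnWith hg)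
  simp only [mul_one, one_mul] at hdrift hnoise
  refine (((hη.isBigO.trans hlen).add hdrift).add hnoise).congr_left fun p => ?_
  ring

theorem continuousOn_of_isBigO_rpow_sub (hγ : 0 < γ)
    (hη : (fun p => η p.2 - η p.1) =O[shortSubintervals a b] fun p => (p.2 - p.1) ^ (γ : ℝ)) :
    ContinuousOn η (Set.Icc a b) := by
  have hpow : Tendsto (fun p : ℝ × ℝ => (p.2 - p.1) ^ (γ : ℝ)) (shortSubintervals a b) (𝓝 0) :=
    ((tendsto_sub_shortSubintervals a b).mono_right inf_le_left).rpow_const_nhds_zero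
      (NNReal.coe_pos.2 hγ)
  refine continuousOn_of_tendsto_dist_shortSubintervals ?_
  simpa only [dist_eq_norm', norm_zero] using (hη.trans_tendsto hpow).norm

section ChainRule

variable {E : Type*} [NormedAddCommGroup E] [NormedSpace ℝ E] {M α : ℝ≥0} {u ut ux : ℝ → ℝ → E}

theorem isLittleO_comp_sub_sub_smul (hαγ : 1 < (1 + α) * γ)
    (hux : ∀ t x, HasDerivAt (u t) (ux t x) x) (huxH : ∀ t, HolderWith M α (ux t))
    (hη : (fun p => η p.2 - η p.1) =O[shortSubintervals a b] fun p => (p.2 - p.1) ^ (γ : ℝ)) :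
    (fun p => u p.1 (η p.2) - u p.1 (η p.1) - (η p.2 - η p.1) • ux p.1 (η p.1))
      =o[shortSubintervals a b] fun p => p.2 - p.1 := by
  have htaylor : (fun p => u p.1 (η p.2) - u p.1 (η p.1) - (η p.2 - η p.1) • ux p.1 (η p.1))
      =O[shortSubintervals a b] fun p => |η p.2 - η p.1| ^ (1 + α : ℝ) := by
    refine .of_bound M (.of_forall fun p => ?_)
    rw [Real.norm_of_nonneg (by positivity)]
    exact norm_sub_sub_smul_le_of_holderWith (hux p.1) (huxH p.1) (η p.1) (η p.2)
  have hpow : (fun p => |η p.2 - η p.1| ^ (1 + α : ℝ)) =O[shortSubintervals a b]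
      fun p => (p.2 - p.1) ^ ((1 + α) * γ : ℝ) := by
    have hnonneg := eventually_mem_shortSubintervals a b
    refine (hη.norm_left.rpow (by positivity) ?_).congr' .rfl ?_
    · filter_upwards [hnonneg] with p hp using Real.rpow_nonneg (sub_nonneg.2 hp.2.1) _
    · filter_upwards [hnonneg] with p hp
      rw [mul_comm, Real.rpow_mul (sub_nonneg.2 hp.2.1)]
  exact (htaylor.trans hpow).trans_isLittleO
    (isLittleO_rpow_sub_shortSubintervals (mod_cast hαγ))

theorem HasYoungDifferential.chain_rule {u ut ux : ℝ → ℝ → ℝ}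
    (hη : HasYoungDifferential η e f g a b) (hαγ : 1 < (1 + α) * γ)
    (hηγ : (fun p => η p.2 - η p.1) =O[shortSubintervals a b] fun p => (p.2 - p.1) ^ (γ : ℝ))
    (hut : ∀ t x, HasDerivAt (fun s => u s x) (ut t x) t)
    (hutc : Continuous fun p : ℝ × ℝ => ut p.1 p.2)
    (hux : ∀ t x, HasDerivAt (u t) (ux t x) x) (huxH : ∀ t, HolderWith M α (ux t))
    (huxc : Continuous fun p : ℝ × ℝ => ux p.1 p.2) :
    HasYoungDifferential (fun t => u t (η t)) (fun s => ut s (η s) + ux s (η s) * e s)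
      (fun s => ux s (η s) * f s) g a b := by
  have hγ0 : 0 < γ := pos_of_mul_pos_right (zero_lt_one.trans hαγ) zero_le
  have hηc := continuousOn_of_isBigO_rpow_sub hγ0 hηγ
  have huxη : ContinuousOn (fun s => ux s (η s)) (Set.Icc a b) :=
    huxc.comp_continuousOn (continuousOn_id.prodMk hηc)
  have htime := isLittleO_sub_sub_smul_of_hasDerivAt hut hutc hηc
  have hspace := isLittleO_comp_sub_sub_smul hαγ hux huxH hηγ
  have hpath := (isBigO_one_fst_of_continuousOn huxη).mul_isLittleO hη
  simp only [one_mul] at hpath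
  refine ((htime.add hspace).add hpath).congr_left fun p => ?_
  simp only [smul_eq_mul]; ring

end ChainRule

end YoungDifferential

section Hypotheses

variable {F F' : ℝ → ℝ} {A : Set ℝ} {C : ℝ} {r : ℝ≥0}

theorem holderOnWith_of_abs_sub_le
    (hF : ∀ x ∈ A, ∀ y ∈ A, |F x - F y| ≤ C * |x - y| ^ (r : ℝ)) :
    HolderOnWith C.toNNReal r F A := by
  intro x hx y hy
  rw [edist_dist, edist_dist, ENNReal.ofReal_rpow_of_nonneg dist_nonneg r.coe_nonneg]
  exact (ENNReal.ofReal_le_ofReal (hF x hx y hy)).trans_eq (ENNReal.ofReal_mul' (by positivity))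

theorem holderWith_one_of_abs_deriv_le (hF : ∀ x, HasDerivAt F (F' x) x)
    (hF' : ∀ x, |F' x| ≤ C) : HolderWith C.toNNReal 1 F :=
  (lipschitzWith_of_nnnorm_deriv_le (fun x => (hF x).differentiableAt) fun x => by
    rw [(hF x).deriv, ← NNReal.coe_le_coe]
    exact (hF' x).trans (Real.le_coe_toNNReal C)).holderWith

end Hypotheses

theorem change_of_variables_young_general
    {u ut ux : ℝ → ℝ → ℝ} {e f g η : ℝ → ℝ} {a b : ℝ} {α β γ Cf Cg M : ℝ≥0}
    (hβγ : 1 < β + γ) (hαγ : 1 < (1 + α) * γ) (hγ : γ ≤ 1)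
    (hf : HolderOnWith Cf β f (Set.Icc a b)) (hg : HolderOnWith Cg γ g (Set.Icc a b))
    (he : ContinuousOn e (Set.Icc a b))
    (hut : ∀ t x, HasDerivAt (fun s => u s x) (ut t x) t)
    (hutc : Continuous fun p : ℝ × ℝ => ut p.1 p.2)
    (hux : ∀ t x, HasDerivAt (u t) (ux t x) x) (huxH : ∀ t, HolderWith M α (ux t))
    (hη : ∀ t ∈ Set.Icc a b, ∃ I,
      IsRSIntegral f g a t I ∧ η t = η a + (∫ s in a..t, e s) + I) :
    ∀ t ∈ Set.Icc a b, ∃ J, IsRSIntegral (fun s => ux s (η s) * f s) g a t J ∧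
      u t (η t) - u a (η a) = (∫ s in a..t, (ut s (η s) + ux s (η s) * e s)) + J := by
  have hα0 : 0 < α := pos_of_lt_add_right (hαγ.trans_le (mul_le_of_le_one_right' hγ))
  have hβ0 : 0 < β := pos_of_lt_add_left (hγ.trans_lt hβγ)
  have hγ0 : 0 < γ := pos_of_mul_pos_right (zero_lt_one.trans hαγ) zero_le
  have hdη := hasYoungDifferential_of_isRSIntegral hβγ he hf hg hη
  have hηγ := hdη.isBigO_rpow_sub hγ he (hf.continuousOn hβ0) hg
  have hηc := continuousOn_of_isBigO_rpow_sub hγ0 hηγ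
  have hgraph : ContinuousOn (fun s => (s, η s)) (Set.Icc a b) := continuousOn_id.prodMk hηc
  have hu (x : ℝ) : Continuous fun t => u t x :=
    continuous_iff_continuousAt.2 fun t => (hut t x).continuousAt
  have huxc := continuous_deriv_of_holderWith hα0 hu hux huxH
  have hdrift := (hutc.comp_continuousOn hgraph).add ((huxc.comp_continuousOn hgraph).mul he)
  have hdv := hdη.chain_rule hαγ hηγ hut hutc hux huxH huxc
  intro t ht
  refine ⟨_, (hdv.mono_right ht.2).isRSIntegral (hdrift.mono (Set.Icc_subset_Icc_right ht.2)), ?_⟩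
  ring

end

/-- Change of variables formula (deterministic Itô formula) for Young
integrals: if `η(t) = η(0) + ∫₀ᵗ e ds + ∫₀ᵗ f dg` with `f ∈ C^β`, `g ∈ C^γ`,
`1/2 < γ < 1`, `β > 1 − γ`, then `v(t) = u(t, η(t))` satisfies
`v(t) − v(0) = ∫₀ᵗ (u_t(s,η(s)) + u_x(s,η(s)) e(s)) ds + ∫₀ᵗ u_x(s,η(s)) f(s) dg(s)`,
with no second-order correction term. -/
theorem change_of_variables_young
    (u ut ux uxx : ℝ → ℝ → ℝ) (e f g η : ℝ → ℝ) (β γ Cf Cg T M : ℝ)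
    (hγ : 1 / 2 < γ) (hγ1 : γ < 1) (hβ : 1 - γ < β) (hβ1 : β ≤ 1) (hT : 0 < T)
    (hf : ∀ x ∈ Icc (0 : ℝ) T, ∀ y ∈ Icc (0 : ℝ) T, |f x - f y| ≤ Cf * |x - y| ^ β)
    (hg : ∀ x ∈ Icc (0 : ℝ) T, ∀ y ∈ Icc (0 : ℝ) T, |g x - g y| ≤ Cg * |x - y| ^ γ)
    (he : ContinuousOn e (Icc 0 T))
    (hut : ∀ t x : ℝ, HasDerivAt (fun s => u s x) (ut t x) t)
    (hutc : Continuous fun p : ℝ × ℝ => ut p.1 p.2)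
    (hux : ∀ t x : ℝ, HasDerivAt (fun y => u t y) (ux t x) x)
    (huxx : ∀ t x : ℝ, HasDerivAt (fun y => ux t y) (uxx t x) x)
    (huxxM : ∀ t x : ℝ, |uxx t x| ≤ M)
    (hη : ∀ t ∈ Icc (0 : ℝ) T, ∃ I : ℝ,
      IsRSIntegral f g 0 t I ∧ η t = η 0 + (∫ s in (0 : ℝ)..t, e s) + I) :
    ∀ t ∈ Icc (0 : ℝ) T, ∃ J : ℝ,
      IsRSIntegral (fun s => ux s (η s) * f s) g 0 t J ∧
      u t (η t) - u 0 (η 0) =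
        (∫ s in (0 : ℝ)..t, (ut s (η s) + ux s (η s) * e s)) + J := by
  lift γ to NNReal using by linarith
  lift β to NNReal using by linarith
  have hβγ : 1 < β + γ := by rw [← NNReal.coe_lt_coe]; push_cast; linarith
  have hαγ : 1 < (1 + 1) * γ := by rw [← NNReal.coe_lt_coe]; push_cast; linarith
  exact change_of_variables_young_general hβγ hαγ (mod_cast hγ1.le)
    (holderOnWith_of_abs_sub_le hf) (holderOnWith_of_abs_sub_le hg) he hut hutc hux
    (fun t => holderWith_one_of_abs_deriv_le (huxx t) (huxxM t)) hη
end
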